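/- Let C be a Z₂Z₄[ξ]-skew cyclic code, identified with a left R₄[x,θ₄]-submodule of R_θ, and let Ψ : C → R₄[x,θ₄]/⟨x^s−1⟩ be the projection onto the second coordinate. If Ψ(C) = ⟨2q(x)⟩ with the mod-2 reduction of q(x) a right divisor of x^s−1 in R₂[x,θ₂], then C = ⟨(f(x),0), (l₁(x), 2q(x))⟩, where f(x) is a right divisor of x^r−1 in R₂[x,θ₂] and l₁(x) ∈ R₂[x,θ₂] satisfies f(x) |_r h_q(x)l₁(x) (mod 2), where x^s−1 = h_q(x)q(x) (mod 2). -/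

import Mathlib

set_option synthInstance.maxHeartbeats 1000000
set_option maxHeartbeats 2000000

noncomputable section
open Polynomial

abbrev Z4 : Type := ZMod 4
abbrev Z2 : Type := ZMod 2

/-- The mod 2 reduction map `Z₄ → Z₂`. -/
def bar : Z4 →+* Z2 := ZMod.castHom (m := 2) (by norm_num) Z2

/-- The ring `R₄ = Z₄[x]/⟨h⟩` (for `h` basic primitive, the Galois ring `GR(4,m)`). -/
abbrev R4 (h : Z4[X]) : Type := Z4[X] ⧸ Ideal.span {h}

/-- The ring `R₂ = Z₂[x]/⟨h̄⟩` (for `h` basic primitive, the field `F_{2^m}`). -/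
abbrev R2 (h : Z4[X]) : Type := Z2[X] ⧸ Ideal.span {h.map bar}

/-- `ξ`, the class of `x` in `R₄`. -/
def xi (h : Z4[X]) : R4 h := Ideal.Quotient.mk _ X

/-- `ξ̄`, the class of `x` in `R₂`. -/
def xibar (h : Z4[X]) : R2 h := Ideal.Quotient.mk _ X

/-- The coefficientwise mod 2 reduction `R₄ → R₂`. -/
def barR (h : Z4[X]) : R4 h →+* R2 h :=
  Ideal.quotientMap (Ideal.span {h.map bar}) (Polynomial.mapRingHom bar)
    (by
      rw [Ideal.span_le]
      intro p hp
      simp only [Set.mem_singleton_iff] at hp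
      subst hp
      exact Ideal.mem_comap.mpr (Ideal.subset_span (by simp)))

/-- The canonical representative (of degree `< deg h`) of an element of `R₄`. -/
def rep4 (h : Z4[X]) (α : R4 h) : Z4[X] := Quotient.out α %ₘ h

/-- The canonical representative (of degree `< deg h̄`) of an element of `R₂`. -/
def rep2 (h : Z4[X]) (α : R2 h) : Z2[X] := Quotient.out α %ₘ (h.map bar)

/-- The Frobenius map `θ₄ : ∑ vᵢ ξ^i ↦ ∑ vᵢ ξ^{2i}` of `R₄`, as a bare function:
substitute `ξ²` in the canonical representative. -/
def thetaFun4 (h : Z4[X]) (α : R4 h) : R4 h := Polynomial.aeval (xi h ^ 2) (rep4 h α)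

/-- The Frobenius map `θ₂ : ∑ vᵢ ξ̄^i ↦ ∑ vᵢ ξ̄^{2i}` of `R₂`, as a bare function. -/
def thetaFun2 (h : Z4[X]) (α : R2 h) : R2 h := Polynomial.aeval (xibar h ^ 2) (rep2 h α)

/-- A lift `ι : R₂ → R₄` with `ι` mod 2 the identity: lift the coefficients of the
canonical representative from `{0,1}`. -/
def iota (h : Z4[X]) (α : R2 h) : R4 h :=
  Ideal.Quotient.mk _ ((rep2 h α).sum fun i a => C ((a.val : Z4)) * X ^ i)

/-- `h` is a monic basic primitive polynomial of degree `m`:  `h` is monic, its mod 2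
reduction `h̄` is irreducible over `Z₂`, and the root `ξ̄` of `h̄` is a primitive
element, i.e. has multiplicative order `2^m - 1`. -/
def BasicPrimitive (h : Z4[X]) (m : ℕ) : Prop :=
  h.Monic ∧ h.natDegree = m ∧ Irreducible (h.map bar) ∧ orderOf (xibar h) = 2 ^ m - 1

/-- The scalar multiplication `γ * (α,β) = (γ̄α, γβ)` making `R₂^r × R₄^s` (or any
mixed-alphabet tuple space) an `R₄`-module. -/
def smulStar (h : Z4[X]) {α β : Type*} (γ : R4 h) (v : (α → R2 h) × (β → R4 h)) :
    (α → R2 h) × (β → R4 h) :=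
  (fun i => barR h γ * v.1 i, fun j => γ * v.2 j)

/-! ### Skew polynomial rings -/

/-- The additive endomorphism `p(x) ↦ pᶿ(x)·x` of `A[x]` (the twisted shift). -/
def Tmap {A : Type*} [CommRing A] (θ : A →+* A) : AddMonoid.End (Polynomial A) :=
  (AddMonoidHom.mulRight (X : Polynomial A)).comp (Polynomial.mapRingHom θ).toAddMonoidHom

/-- Left multiplication by the constant `a`, as an additive endomorphism of `A[x]`. -/
def Lmap {A : Type*} [CommRing A] (a : A) : AddMonoid.End (Polynomial A) :=
  AddMonoidHom.mulLeft (C a)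

/-- The skew polynomial ring `A[x;θ]`, realized as the subring of additive
endomorphisms of `A[x]` generated by the constants (acting by left multiplication)
and the twisted shift `Tmap θ`.  In this model multiplication is composition, so
`(a·xᵏ)·(b·xʲ) = a θᵏ(b) x^{k+j}`, i.e. `x·a = θ(a)·x`. -/
def SkewPolySubring (A : Type*) [CommRing A] (θ : A →+* A) :
    Subring (AddMonoid.End (Polynomial A)) :=
  Subring.closure ((Set.range (Lmap (A := A))) ∪ {Tmap θ})

/-- The skew polynomial ring `A[x;θ]` as a type. -/
abbrev Skew (A : Type*) [CommRing A] (θ : A →+* A) : Type _ := SkewPolySubring A θ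

/-- The element `x` of `A[x;θ]`. -/
def xSkew (A : Type*) [CommRing A] (θ : A →+* A) : Skew A θ :=
  ⟨Tmap θ, Subring.subset_closure (Set.mem_union_right _ rfl)⟩

/-- The constant `a` as an element of `A[x;θ]`. -/
def cSkew {A : Type*} [CommRing A] (θ : A →+* A) (a : A) : Skew A θ :=
  ⟨Lmap a, Subring.subset_closure (Set.mem_union_left _ ⟨a, rfl⟩)⟩

/-- The skew polynomial `∑ aᵢ xⁱ ∈ A[x;θ]` attached to coefficient data `p = ∑ aᵢ Xⁱ`. -/
def ofPoly {A : Type*} [CommRing A] (θ : A →+* A) (p : Polynomial A) : Skew A θ :=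
  p.sum fun i a => cSkew θ a * xSkew A θ ^ i

/-- The coefficient data of a skew polynomial, recovered by applying the
endomorphism to the polynomial `1`. -/
def toPoly {A : Type*} [CommRing A] {θ : A →+* A} (f : Skew A θ) : Polynomial A :=
  (f : AddMonoid.End (Polynomial A)) 1

/-- `g |ᵣ p` : `g` is a right divisor of `p` in `A[x;θ]`, i.e. `p = u·g`. -/
def RDvd {A : Type*} [CommRing A] {θ : A →+* A} (g p : Skew A θ) : Prop :=
  ∃ u : Skew A θ, p = u * g

/-- The left ideal `⟨x^n - 1⟩` of `A[x;θ]`. -/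
def skewIdeal (A : Type*) [CommRing A] (θ : A →+* A) (n : ℕ) :
    Submodule (Skew A θ) (Skew A θ) :=
  Submodule.span (Skew A θ) {xSkew A θ ^ n - 1}

/-- The quotient left `A[x;θ]`-module `A[x;θ]/⟨x^n-1⟩`. -/
abbrev SkewQuot (A : Type*) [CommRing A] (θ : A →+* A) (n : ℕ) : Type _ :=
  Skew A θ ⧸ skewIdeal A θ n

/-- The polynomial `c₀ + c₁X + ⋯ + c_{n-1}X^{n-1}` attached to a word `c ∈ Aⁿ`. -/
def wordPoly {A : Type*} [CommRing A] {n : ℕ} (c : Fin n → A) : Polynomial A :=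
  ∑ i : Fin n, C (c i) * X ^ (i : ℕ)

/-- Identify the word `c ∈ Aⁿ` with the class of `∑ cᵢ xⁱ` in `A[x;θ]/⟨x^n-1⟩`. -/
def wordToQuot {A : Type*} [CommRing A] (θ : A →+* A) {n : ℕ} (c : Fin n → A) :
    SkewQuot A θ n :=
  Submodule.Quotient.mk (ofPoly θ (wordPoly c))

/-- A linear code of length `n` over `A`: an `A`-submodule of `Aⁿ`, as a set. -/
def IsLinearCode (A : Type*) [CommRing A] {n : ℕ} (C : Set (Fin n → A)) : Prop :=
  0 ∈ C ∧ (∀ u ∈ C, ∀ v ∈ C, u + v ∈ C) ∧ ∀ γ : A, ∀ u ∈ C, γ • u ∈ C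

/-- The `θ`-cyclic shift `(c₀,…,c_{n-1}) ↦ (θ(c_{n-1}),θ(c₀),…,θ(c_{n-2}))`. -/
def skewShift {A : Type*} [CommRing A] (θ : A →+* A) {n : ℕ} [NeZero n]
    (c : Fin n → A) : Fin n → A :=
  fun i => θ (c (i - 1))
/-! ### The module `R_θ` and `Z₂Z₄[ξ]`-codes -/

/-- A `Z₂Z₄[ξ]`-linear code: an `R₄`-submodule of `R₂^r × R₄^s` (as a set). -/
def IsZ2Z4Linear (h : Z4[X]) {r s : ℕ} (C : Set ((Fin r → R2 h) × (Fin s → R4 h))) : Prop :=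
  0 ∈ C ∧ (∀ u ∈ C, ∀ v ∈ C, u + v ∈ C) ∧ ∀ γ : R4 h, ∀ u ∈ C, smulStar h γ u ∈ C

/-- The joint `θ`-cyclic shift on `R₂^r × R₄^s`. -/
def jointShift (h : Z4[X]) (θ2 : R2 h →+* R2 h) (θ4 : R4 h →+* R4 h) {r s : ℕ}
    [NeZero r] [NeZero s] (v : (Fin r → R2 h) × (Fin s → R4 h)) :
    (Fin r → R2 h) × (Fin s → R4 h) :=
  (skewShift θ2 v.1, skewShift θ4 v.2)

/-- The identification of `R₂^r × R₄^s` with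
`R_θ = R₂[x;θ₂]/⟨x^r-1⟩ × R₄[x;θ₄]/⟨x^s-1⟩`. -/
def pairToQuot (h : Z4[X]) (θ2 : R2 h →+* R2 h) (θ4 : R4 h →+* R4 h) {r s : ℕ}
    (v : (Fin r → R2 h) × (Fin s → R4 h)) :
    SkewQuot (R2 h) θ2 r × SkewQuot (R4 h) θ4 s :=
  (wordToQuot θ2 v.1, wordToQuot θ4 v.2)

/-- The coefficientwise mod 2 reduction `R₄[x;θ₄] → R₂[x;θ₂]`, `f ↦ f̄`. -/
def redSkew (h : Z4[X]) (θ2 : R2 h →+* R2 h) {θ4 : R4 h →+* R4 h}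
    (f : Skew (R4 h) θ4) : Skew (R2 h) θ2 :=
  ofPoly θ2 ((toPoly f).map (barR h))

/-- The left action of `R₄[x;θ₄]` on `R_θ`, `f * (g(x), h(x)) = (f̄ g mod (x^r-1), f h mod (x^s-1))`. -/
def smulRtheta (h : Z4[X]) (θ2 : R2 h →+* R2 h) (θ4 : R4 h →+* R4 h) {r s : ℕ}
    (f : Skew (R4 h) θ4)
    (u : SkewQuot (R2 h) θ2 r × SkewQuot (R4 h) θ4 s) :
    SkewQuot (R2 h) θ2 r × SkewQuot (R4 h) θ4 s :=
  (redSkew h θ2 f • u.1, f • u.2)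

/-- `D` is a left `R₄[x;θ₄]`-submodule of `R_θ` (with respect to the action above). -/
def IsLeftSubmodRtheta (h : Z4[X]) (θ2 : R2 h →+* R2 h) (θ4 : R4 h →+* R4 h) {r s : ℕ}
    (D : Set (SkewQuot (R2 h) θ2 r × SkewQuot (R4 h) θ4 s)) : Prop :=
  0 ∈ D ∧ (∀ u ∈ D, ∀ v ∈ D, u + v ∈ D) ∧
    ∀ f : Skew (R4 h) θ4, ∀ u ∈ D, smulRtheta h θ2 θ4 f u ∈ D


section helpers
variable {A : Type*} [CommRing A] {θ : A →+* A}

lemma xpow_apply (k : ℕ) (P : Polynomial A) :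
    ((xSkew A θ ^ k : Skew A θ) : AddMonoid.End (Polynomial A)) P = P.map (θ ^ k) * X ^ k := by
  induction k with
  | zero => simp [Polynomial.map_id, RingHom.one_def]
  | succ k ih =>
    rw [pow_succ', Subring.coe_mul, AddMonoid.End.coe_mul, Function.comp_apply, ih]
    change (Polynomial.map θ (P.map (θ ^ k) * X ^ k)) * X = _
    rw [Polynomial.map_mul, Polynomial.map_map, Polynomial.map_pow, Polynomial.map_X, mul_assoc,
      ← pow_succ, pow_succ' θ]
    rfl

lemma mono_apply (a : A) (k : ℕ) (P : Polynomial A) :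
    ((cSkew θ a * xSkew A θ ^ k : Skew A θ) : AddMonoid.End (Polynomial A)) P
      = C a * (P.map (θ ^ k) * X ^ k) := by
  rw [Subring.coe_mul, AddMonoid.End.coe_mul, Function.comp_apply, xpow_apply]
  rfl

lemma cSkew_add (a b : A) : cSkew θ (a + b) = cSkew θ a + cSkew θ b := by
  apply Subtype.ext
  refine AddMonoidHom.ext fun P => ?_
  change C (a + b) * P = C a * P + C b * P
  rw [C_add, add_mul]

lemma cSkew_zero : cSkew θ (0 : A) = 0 := by
  have := cSkew_add (θ := θ) 0 0
  simpa using this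

lemma cSkew_one : cSkew θ (1 : A) = 1 := by
  apply Subtype.ext
  refine AddMonoidHom.ext fun P => ?_
  change C 1 * P = P
  simp

lemma ofPoly_add (p q : Polynomial A) : ofPoly θ (p + q) = ofPoly θ p + ofPoly θ q := by
  unfold ofPoly
  apply Polynomial.sum_add_index
  · intro i; rw [cSkew_zero, zero_mul]
  · intro i a b; rw [cSkew_add, add_mul]

lemma ofPoly_monomial (k : ℕ) (a : A) :
    ofPoly θ (monomial k a) = cSkew θ a * xSkew A θ ^ k := by
  unfold ofPoly
  apply Polynomial.sum_monomial_index
  rw [cSkew_zero, zero_mul]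

/-- additive version of `ofPoly` -/
def ofPolyHom (θ : A →+* A) : Polynomial A →+ Skew A θ :=
  AddMonoidHom.mk' (ofPoly θ) ofPoly_add

lemma ofPoly_zero : ofPoly θ (0 : Polynomial A) = 0 := map_zero (ofPolyHom θ)
lemma ofPoly_neg (p : Polynomial A) : ofPoly θ (-p) = - ofPoly θ p := map_neg (ofPolyHom θ) p

lemma toPoly_add (f g : Skew A θ) : toPoly (f + g) = toPoly f + toPoly g := rfl
lemma toPoly_sub (f g : Skew A θ) : toPoly (f - g) = toPoly f - toPoly g := rfl
lemma toPoly_mul (f g : Skew A θ) :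
    toPoly (f * g) = (f : AddMonoid.End (Polynomial A)) (toPoly g) := rfl

lemma toPoly_ofPoly (p : Polynomial A) : toPoly (ofPoly θ p) = p := by
  induction p using Polynomial.induction_on' with
  | add p q hp hq => rw [ofPoly_add, toPoly_add, hp, hq]
  | monomial k a =>
    rw [ofPoly_monomial, toPoly, mono_apply]
    simp [C_mul_X_pow_eq_monomial]

lemma mono_mul_mono (a b : A) (i j : ℕ) :
    (cSkew θ a * xSkew A θ ^ i) * (cSkew θ b * xSkew A θ ^ j)
      = cSkew θ (a * (θ ^ i) b) * xSkew A θ ^ (i + j) := by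
  apply Subtype.ext
  refine AddMonoidHom.ext fun P => ?_
  change ((cSkew θ a * xSkew A θ ^ i : Skew A θ) : AddMonoid.End (Polynomial A))
    (((cSkew θ b * xSkew A θ ^ j : Skew A θ) : AddMonoid.End (Polynomial A)) P)
    = ((cSkew θ (a * (θ ^ i) b) * xSkew A θ ^ (i + j) : Skew A θ) :
      AddMonoid.End (Polynomial A)) P
  rw [mono_apply, mono_apply, mono_apply]
  simp only [Polynomial.map_mul, Polynomial.map_map, Polynomial.map_C, Polynomial.map_pow,
    Polynomial.map_X, C_mul, pow_add]
  have : (θ ^ i).comp (θ ^ j) = θ ^ i * θ ^ j := rfl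
  rw [this]
  ring

lemma ofPoly_surj (f : Skew A θ) : ∃ p, f = ofPoly θ p := by
  obtain ⟨f, hf⟩ := f
  unfold SkewPolySubring at hf
  induction hf using Subring.closure_induction with
  | mem x hx =>
    rcases hx with ⟨a, rfl⟩ | hx
    · refine ⟨monomial 0 a, ?_⟩
      rw [ofPoly_monomial, pow_zero, mul_one]; rfl
    · refine ⟨monomial 1 1, ?_⟩
      rw [ofPoly_monomial, pow_one, cSkew_one, one_mul]
      exact Subtype.ext hx
  | zero => exact ⟨0, by rw [ofPoly_zero]; rfl⟩
  | one => exact ⟨monomial 0 1, by rw [ofPoly_monomial, cSkew_one, pow_zero, mul_one]; rfl⟩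
  | add x y hx hy h1 h2 =>
    obtain ⟨p, hp⟩ := h1
    obtain ⟨q, hq⟩ := h2
    exact ⟨p + q, by rw [ofPoly_add, ← hp, ← hq]; rfl⟩
  | neg x hx h1 =>
    obtain ⟨p, hp⟩ := h1
    exact ⟨-p, by rw [ofPoly_neg, ← hp]; rfl⟩
  | mul x y hx hy h1 h2 =>
    obtain ⟨p, hp⟩ := h1
    obtain ⟨q, hq⟩ := h2
    have key : ∀ p q : Polynomial A, ∃ t, ofPoly θ p * ofPoly θ q = ofPoly θ t := by
      intro p q
      induction p using Polynomial.induction_on' with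
      | add p p' hp hp' =>
        obtain ⟨t, ht⟩ := hp
        obtain ⟨t', ht'⟩ := hp'
        exact ⟨t + t', by rw [ofPoly_add, ofPoly_add, add_mul, ht, ht']⟩
      | monomial i a =>
        induction q using Polynomial.induction_on' with
        | add p p' hp hp' =>
          obtain ⟨t, ht⟩ := hp
          obtain ⟨t', ht'⟩ := hp'
          exact ⟨t + t', by rw [ofPoly_add, ofPoly_add, mul_add, ht, ht']⟩
        | monomial j b =>
          refine ⟨monomial (i + j) (a * (θ ^ i) b), ?_⟩
          rw [ofPoly_monomial, ofPoly_monomial, mono_mul_mono, ofPoly_monomial]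
    obtain ⟨t, ht⟩ := key p q
    exact ⟨t, by rw [← ht, ← hp, ← hq]; rfl⟩

lemma ofPoly_toPoly (f : Skew A θ) : ofPoly θ (toPoly f) = f := by
  obtain ⟨p, rfl⟩ := ofPoly_surj f
  rw [toPoly_ofPoly]

/-- Left ideals of a skew polynomial ring over a field are principal. -/
lemma principal [Nontrivial A] (hA : ∀ a : A, a ≠ 0 → ∃ b, a * b = 1)
    (J : Submodule (Skew A θ) (Skew A θ)) :
    ∃ f ∈ J, ∀ g ∈ J, ∃ u : Skew A θ, g = u * f := by
  classical
  by_cases hJ : ∃ n : ℕ, ∃ f ∈ J, toPoly f ≠ 0 ∧ (toPoly f).natDegree = n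
  · obtain ⟨f, hfJ, hf0, hfn⟩ := Nat.find_spec hJ
    have hmin : ∀ g ∈ J, toPoly g ≠ 0 → (toPoly f).natDegree ≤ (toPoly g).natDegree := by
      intro g hg h0
      rw [hfn]
      exact Nat.find_min' hJ ⟨g, hg, h0, rfl⟩
    refine ⟨f, hfJ, ?_⟩
    obtain ⟨b, hb⟩ := hA (toPoly f).leadingCoeff (leadingCoeff_ne_zero.mpr hf0)
    have key : ∀ n : ℕ, ∀ g ∈ J, (toPoly g).degree < n → ∃ u : Skew A θ, g = u * f := by
      intro n
      induction n with
      | zero =>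
        intro g hg hd
        have h0 : toPoly g = 0 := by
          rw [← degree_eq_bot]
          exact Nat.WithBot.lt_zero_iff.mp (by simpa using hd)
        refine ⟨0, ?_⟩
        rw [← ofPoly_toPoly g, h0, ofPoly_zero, zero_mul]
      | succ n ih =>
        intro g hg hd
        by_cases h0 : toPoly g = 0
        · refine ⟨0, ?_⟩
          rw [← ofPoly_toPoly g, h0, ofPoly_zero, zero_mul]
        have hdn : (toPoly g).natDegree ≤ n := by
          have := (natDegree_lt_iff_degree_lt h0).mpr hd
          omega
        have hfn' : (toPoly f).natDegree ≤ n := (hmin g hg h0).trans hdn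
        obtain ⟨k, hk⟩ := Nat.exists_eq_add_of_le hfn'
        set a := (toPoly g).coeff n * (θ ^ k) b with ha
        set w : Skew A θ := cSkew θ a * xSkew A θ ^ k with hw
        have hwp : toPoly (w * f) = C a * ((toPoly f).map (θ ^ k) * X ^ k) := by
          rw [toPoly_mul, hw, mono_apply]
        have hdw : (toPoly (w * f)).natDegree ≤ n := by
          rw [hwp]
          refine (natDegree_C_mul_le _ _).trans (natDegree_mul_le.trans ?_)
          have h1 := natDegree_map_le (f := θ ^ k) (p := toPoly f)
          have h2 := natDegree_X_pow_le (R := A) k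
          omega
        have hcw : (toPoly (w * f)).coeff n = (toPoly g).coeff n := by
          rw [hwp, coeff_C_mul, hk, coeff_mul_X_pow, coeff_map, coeff_natDegree, ha, ← hk,
            mul_assoc, ← map_mul, mul_comm b, hb, map_one, mul_one]
        have hmem : g - w * f ∈ J := J.sub_mem hg (J.smul_mem w hfJ)
        obtain ⟨u, hu⟩ := ih _ hmem (by
          rw [degree_lt_iff_coeff_zero]
          intro j hj
          rw [toPoly_sub, coeff_sub]
          rcases hj.eq_or_lt with rfl | hj
          · rw [hcw, sub_self]
          · rw [coeff_eq_zero_of_natDegree_lt (by omega), coeff_eq_zero_of_natDegree_lt (by omega),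
              sub_self])
        exact ⟨u + w, by rw [add_mul, ← hu]; abel⟩
    intro g hg
    exact key ((toPoly g).natDegree + 1) g hg
      (degree_le_natDegree.trans_lt (by exact_mod_cast Nat.lt_succ_self _))
  · push Not at hJ
    refine ⟨0, J.zero_mem, fun g hg => ⟨0, ?_⟩⟩
    have : toPoly g = 0 := by
      by_contra h0
      exact hJ _ g hg h0 rfl
    rw [← ofPoly_toPoly g, this, ofPoly_zero, zero_mul]

lemma skewIdeal_mem (n : ℕ) (u : Skew A θ) : u * (xSkew A θ ^ n - 1) ∈ skewIdeal A θ n :=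
  Submodule.smul_mem _ u (Submodule.subset_span rfl)

lemma wordToQuot_eq {n : ℕ} (c : Fin n → A) :
    wordToQuot θ c = ∑ i : Fin n,
      (Submodule.Quotient.mk (cSkew θ (c i) * xSkew A θ ^ (i : ℕ)) : SkewQuot A θ n) := by
  unfold wordToQuot wordPoly
  change (skewIdeal A θ n).mkQ (ofPolyHom θ _) = ∑ i, (skewIdeal A θ n).mkQ _
  rw [map_sum, map_sum]
  refine Finset.sum_congr rfl fun i _ => ?_
  rw [C_mul_X_pow_eq_monomial]
  exact congrArg _ (ofPoly_monomial _ _)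

lemma wordToQuot_add {n : ℕ} (c d : Fin n → A) :
    wordToQuot θ (c + d) = wordToQuot θ c + wordToQuot θ d := by
  simp only [wordToQuot_eq, ← Finset.sum_add_distrib]
  refine Finset.sum_congr rfl fun i _ => ?_
  rw [Pi.add_apply, cSkew_add, add_mul]; rfl

lemma wordToQuot_zero {n : ℕ} : wordToQuot θ (0 : Fin n → A) = 0 := by
  have := wordToQuot_add (θ := θ) (0 : Fin n → A) 0
  simpa using this

lemma wordToQuot_smul {n : ℕ} (a : A) (c : Fin n → A) :
    wordToQuot θ (fun i => a * c i) = cSkew θ a • wordToQuot θ c := by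
  simp only [wordToQuot_eq, Finset.smul_sum]
  refine Finset.sum_congr rfl fun i _ => ?_
  rw [← Submodule.Quotient.mk_smul]
  congr 1
  have := mono_mul_mono (θ := θ) a (c i) 0 i
  rw [smul_eq_mul]
  simp only [pow_zero, mul_one, zero_add] at this
  rw [this]; rfl

lemma wordToQuot_shift {n : ℕ} [NeZero n] (c : Fin n → A) :
    wordToQuot θ (skewShift θ c) = xSkew A θ • wordToQuot θ c := by
  simp only [wordToQuot_eq, Finset.smul_sum]
  rw [← Equiv.sum_comp (Equiv.addRight (1 : Fin n))]
  refine Finset.sum_congr rfl fun i _ => ?_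
  rw [← Submodule.Quotient.mk_smul]
  simp only [Equiv.coe_addRight, skewShift, add_sub_cancel_right, smul_eq_mul]
  have h1 : xSkew A θ * (cSkew θ (c i) * xSkew A θ ^ (i : ℕ))
      = cSkew θ (θ (c i)) * xSkew A θ ^ ((i : ℕ) + 1) := by
    have := mono_mul_mono (θ := θ) 1 (c i) 1 i
    simpa [cSkew_one, add_comm] using this
  rw [h1]
  by_cases hi : (i : ℕ) + 1 < n
  · have : ((i + 1 : Fin n) : ℕ) = i + 1 := Fin.val_add_one_of_lt' hi
    rw [this]
  · have hn : (i : ℕ) + 1 = n := by have := i.isLt; omega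
    have h0 : ((i + 1 : Fin n) : ℕ) = 0 := by
      rw [Fin.val_add, Fin.val_one', Nat.add_mod_mod, hn, Nat.mod_self]
    rw [h0, hn, eq_comm, Submodule.Quotient.eq, ← mul_sub, pow_zero]
    exact skewIdeal_mem _ _

end helpers

section red
variable {h : Z4[X]} {θ4 : R4 h →+* R4 h} {θ2 : R2 h →+* R2 h}

lemma redSkew_ofPoly (p : Polynomial (R4 h)) :
    redSkew h θ2 (ofPoly θ4 p) = ofPoly θ2 (p.map (barR h)) := by
  rw [redSkew, toPoly_ofPoly]

lemma redSkew_add (f g : Skew (R4 h) θ4) :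
    redSkew h θ2 (f + g) = redSkew h θ2 f + redSkew h θ2 g := by
  rw [redSkew, toPoly_add, Polynomial.map_add, ofPoly_add]; rfl

lemma redSkew_mul (hc : ∀ a, barR h (θ4 a) = θ2 (barR h a)) (f g : Skew (R4 h) θ4) :
    redSkew h θ2 (f * g) = redSkew h θ2 f * redSkew h θ2 g := by
  have hck : ∀ k a, barR h ((θ4 ^ k) a) = (θ2 ^ k) (barR h a) := by
    intro k
    induction k with
    | zero => intro a; rfl
    | succ k ih =>
      intro a
      rw [pow_succ', pow_succ', RingHom.mul_def, RingHom.mul_def, RingHom.comp_apply,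
        RingHom.comp_apply, hc, ih]
  obtain ⟨p, rfl⟩ := ofPoly_surj f
  obtain ⟨q, rfl⟩ := ofPoly_surj g
  induction p using Polynomial.induction_on' with
  | add p p' hp hp' => rw [ofPoly_add, add_mul, redSkew_add, redSkew_add, hp, hp', add_mul]
  | monomial i a =>
    induction q using Polynomial.induction_on' with
    | add p p' hp hp' => rw [ofPoly_add, mul_add, redSkew_add, redSkew_add, hp, hp', mul_add]
    | monomial j b =>
      rw [ofPoly_monomial, ofPoly_monomial, mono_mul_mono, ← ofPoly_monomial, ← ofPoly_monomial,
        ← ofPoly_monomial, redSkew_ofPoly, redSkew_ofPoly, redSkew_ofPoly,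
        Polynomial.map_monomial, Polynomial.map_monomial, Polynomial.map_monomial,
        ofPoly_monomial, ofPoly_monomial, ofPoly_monomial, mono_mul_mono, map_mul, hck]

lemma redSkew_c (a : R4 h) : redSkew h θ2 (cSkew θ4 a) = cSkew θ2 (barR h a) := by
  have := redSkew_ofPoly (θ2 := θ2) (θ4 := θ4) (monomial 0 a)
  simpa only [ofPoly_monomial, Polynomial.map_monomial, pow_zero, mul_one] using this

lemma redSkew_x : redSkew h θ2 (xSkew (R4 h) θ4) = xSkew (R2 h) θ2 := by
  have := redSkew_ofPoly (θ2 := θ2) (θ4 := θ4) (monomial 1 1)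
  simpa only [ofPoly_monomial, Polynomial.map_monomial, pow_one, map_one, cSkew_one,
    one_mul] using this

lemma barR_surj : Function.Surjective (barR h) := by
  apply Ideal.quotientMap_surjective
  rw [Polynomial.coe_mapRingHom]
  exact Polynomial.map_surjective _ (ZMod.castHom_surjective _)

lemma redSkew_surj (g : Skew (R2 h) θ2) : ∃ f : Skew (R4 h) θ4, redSkew h θ2 f = g := by
  obtain ⟨p, hp⟩ := Polynomial.map_surjective _ (barR_surj (h := h)) (toPoly g)
  exact ⟨ofPoly θ4 p, by rw [redSkew_ofPoly, hp, ofPoly_toPoly]⟩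

lemma two_mul_of_bar (a : R4 h) (ha : barR h a = 0) : 2 * a = 0 := by
  obtain ⟨p, rfl⟩ := Ideal.Quotient.mk_surjective a
  rw [barR, Ideal.quotientMap_mk, Ideal.Quotient.eq_zero_iff_mem,
    Ideal.mem_span_singleton] at ha
  obtain ⟨u, hu⟩ := ha
  obtain ⟨v, rfl⟩ := Polynomial.map_surjective bar (ZMod.castHom_surjective _) u
  have h0 : (p - h * v).map bar = 0 := by
    rw [Polynomial.map_sub, Polynomial.map_mul, ← hu, Polynomial.coe_mapRingHom, sub_self]
  have h2 : 2 * (p - h * v) = 0 := by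
    ext i
    have := congrArg (fun t => t.coeff i) h0
    simp only [coeff_map, coeff_zero] at this
    have h3 : ∀ z : Z4, bar z = 0 → 2 * z = 0 := by
      unfold bar; decide
    rw [coeff_ofNat_mul, coeff_zero]
    exact h3 _ this
  have h4 : 2 * p = h * (2 * v) := by linear_combination h2
  rw [← map_ofNat (Ideal.Quotient.mk (Ideal.span {h})) 2, ← map_mul,
    Ideal.Quotient.eq_zero_iff_mem, h4]
  exact Ideal.mul_mem_right _ _ (Ideal.subset_span rfl)

lemma ofPoly_two_mul (p : Polynomial (R4 h)) : ofPoly θ4 (2 * p) = 2 * ofPoly θ4 p := by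
  rw [two_mul, ofPoly_add, two_mul]

lemma two_mul_of_red (f : Skew (R4 h) θ4) (hf : redSkew h θ2 f = 0) : 2 * f = 0 := by
  have h0 : (toPoly f).map (barR h) = 0 := by
    have := congrArg toPoly hf
    rw [redSkew, toPoly_ofPoly] at this
    rw [this]; rfl
  rw [← ofPoly_toPoly f, ← ofPoly_two_mul]
  have : 2 * toPoly f = 0 := by
    ext i
    have := congrArg (fun t => t.coeff i) h0
    simp only [coeff_map, coeff_zero] at this
    rw [coeff_ofNat_mul, coeff_zero]
    exact two_mul_of_bar _ this
  rw [this, ofPoly_zero]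

lemma theta_comm (hmon : h.Monic) (hθ4 : ⇑θ4 = thetaFun4 h) (hθ2 : ⇑θ2 = thetaFun2 h)
    (a : R4 h) : barR h (θ4 a) = θ2 (barR h a) := by
  rw [hθ4, hθ2, thetaFun4, thetaFun2]
  have hmon2 : (h.map bar).Monic := hmon.map bar
  have hrep : rep2 h (barR h a) = (rep4 h a).map bar := by
    rw [rep2, rep4, Polynomial.map_modByMonic _ hmon]
    have h1 : (Ideal.Quotient.mk (Ideal.span {h.map bar})) (Quotient.out (barR h a))
        = barR h a := Quotient.out_eq _
    have h2 : (Ideal.Quotient.mk (Ideal.span {h})) (Quotient.out a) = a := Quotient.out_eq _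
    have h3 : barR h a = Ideal.Quotient.mk (Ideal.span {h.map bar})
        ((Quotient.out a : Z4[X]).map bar) := by
      conv_lhs => rw [← h2]
      rfl
    rw [h3, Ideal.Quotient.eq, Ideal.mem_span_singleton, ← h3] at h1
    rw [← sub_eq_zero, ← Polynomial.sub_modByMonic]
    exact (Polynomial.modByMonic_eq_zero_iff_dvd hmon2).mpr h1
  rw [hrep]
  have hx : barR h (xi h ^ 2) = xibar h ^ 2 := by
    rw [map_pow, xi, xibar, barR, Ideal.quotientMap_mk]
    simp
  rw [← hx, Polynomial.aeval_def, Polynomial.aeval_def, Polynomial.hom_eval₂,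
    Polynomial.eval₂_map]
  congr 1
  exact RingHom.ext_zmod _ _

lemma R2_inv (hirr : Irreducible (h.map bar)) (a : R2 h) (ha : a ≠ 0) : ∃ b, a * b = 1 := by
  haveI : (Ideal.span {h.map bar}).IsMaximal :=
    PrincipalIdealRing.isMaximal_of_irreducible hirr
  exact Ideal.Quotient.exists_inv ha

lemma R2_nontrivial (hirr : Irreducible (h.map bar)) : Nontrivial (R2 h) := by
  haveI : (Ideal.span {h.map bar}).IsMaximal :=
    PrincipalIdealRing.isMaximal_of_irreducible hirr
  exact Ideal.Quotient.nontrivial_iff.mpr this.ne_top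

/-- The image of a skew cyclic code is a left submodule of `R_θ`. -/
lemma code_submod (hc : ∀ a, barR h (θ4 a) = θ2 (barR h a)) {r s : ℕ} [NeZero r] [NeZero s]
    (K : Set ((Fin r → R2 h) × (Fin s → R4 h))) (hlin : IsZ2Z4Linear h K)
    (hcyc : ∀ v ∈ K, jointShift h θ2 θ4 v ∈ K) :
    IsLeftSubmodRtheta h θ2 θ4 (pairToQuot h θ2 θ4 '' K) := by
  obtain ⟨h0, hadd, hsm⟩ := hlin
  have hadd' : ∀ u ∈ pairToQuot h θ2 θ4 '' K, ∀ v ∈ pairToQuot h θ2 θ4 '' K,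
      u + v ∈ pairToQuot h θ2 θ4 '' K := by
    rintro _ ⟨u, hu, rfl⟩ _ ⟨v, hv, rfl⟩
    exact ⟨u + v, hadd u hu v hv,
      Prod.ext (wordToQuot_add _ _) (wordToQuot_add _ _)⟩
  have h0' : (0 : SkewQuot (R2 h) θ2 r × SkewQuot (R4 h) θ4 s) ∈ pairToQuot h θ2 θ4 '' K :=
    ⟨0, h0, Prod.ext wordToQuot_zero wordToQuot_zero⟩
  have hcs : ∀ (a : R4 h), ∀ u ∈ pairToQuot h θ2 θ4 '' K,
      smulRtheta h θ2 θ4 (cSkew θ4 a) u ∈ pairToQuot h θ2 θ4 '' K := by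
    rintro a _ ⟨u, hu, rfl⟩
    refine ⟨smulStar h a u, hsm a u hu, Prod.ext ?_ ?_⟩
    · change wordToQuot θ2 (fun i => barR h a * u.1 i) = redSkew h θ2 (cSkew θ4 a) • _
      rw [wordToQuot_smul, redSkew_c]; rfl
    · exact wordToQuot_smul _ _
  have hxs : ∀ u ∈ pairToQuot h θ2 θ4 '' K,
      smulRtheta h θ2 θ4 (xSkew (R4 h) θ4) u ∈ pairToQuot h θ2 θ4 '' K := by
    rintro _ ⟨u, hu, rfl⟩
    refine ⟨_, hcyc u hu, Prod.ext ?_ ?_⟩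
    · change wordToQuot θ2 (skewShift θ2 u.1) = redSkew h θ2 (xSkew (R4 h) θ4) • _
      rw [wordToQuot_shift, redSkew_x]; rfl
    · exact wordToQuot_shift _
  refine ⟨h0', hadd', fun f => ?_⟩
  obtain ⟨p, rfl⟩ := ofPoly_surj f
  induction p using Polynomial.induction_on' with
  | add p p' hp hp' =>
    intro u hu
    have : smulRtheta h θ2 θ4 (ofPoly θ4 (p + p')) u
        = smulRtheta h θ2 θ4 (ofPoly θ4 p) u + smulRtheta h θ2 θ4 (ofPoly θ4 p') u := by
      rw [ofPoly_add]
      unfold smulRtheta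
      rw [redSkew_add, add_smul, add_smul]; rfl
    rw [this]
    exact hadd' _ (hp u hu) _ (hp' u hu)
  | monomial k a =>
    rw [ofPoly_monomial]
    have hmul : ∀ (f g : Skew (R4 h) θ4) (u : SkewQuot (R2 h) θ2 r × SkewQuot (R4 h) θ4 s),
        smulRtheta h θ2 θ4 (f * g) u = smulRtheta h θ2 θ4 f (smulRtheta h θ2 θ4 g u) := by
      intro f g u
      unfold smulRtheta
      rw [redSkew_mul hc, mul_smul, mul_smul]
    have hk : ∀ k : ℕ, ∀ u ∈ pairToQuot h θ2 θ4 '' K,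
        smulRtheta h θ2 θ4 (xSkew (R4 h) θ4 ^ k) u ∈ pairToQuot h θ2 θ4 '' K := by
      intro k
      induction k with
      | zero =>
        intro u hu
        have := hcs 1 u hu
        rwa [cSkew_one] at this
      | succ k ih =>
        intro u hu
        rw [pow_succ', hmul]
        exact hxs _ (ih u hu)
    intro u hu
    rw [hmul]
    exact hcs _ _ (hk k u hu)

end red

/-- If `Ψ(C) = ⟨2q(x)⟩` with `q̄ |ᵣ x^s−1` in `R₂[x,θ₂]`, then
`C = ⟨(f(x),0), (l₁(x),2q(x))⟩` with `f |ᵣ x^r−1` in `R₂[x,θ₂]` and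
`f |ᵣ h_q l₁ (mod 2)`, where `x^s−1 = h_q(x)q(x) (mod 2)`. -/
theorem z2z4_skew_cyclic_generators_case_i
    (m : ℕ) (hm : 1 ≤ m) (h : Z4[X]) (hbp : BasicPrimitive h m)
    (θ4 : R4 h →+* R4 h) (hθ4 : ⇑θ4 = thetaFun4 h)
    (θ2 : R2 h →+* R2 h) (hθ2 : ⇑θ2 = thetaFun2 h)
    (r s : ℕ) [NeZero r] [NeZero s]
    (C : Set ((Fin r → R2 h) × (Fin s → R4 h))) (hlin : IsZ2Z4Linear h C)
    (hcyc : ∀ v ∈ C, jointShift h θ2 θ4 v ∈ C)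
    (q : Polynomial (R4 h)) (hq : Polynomial (R2 h))
    (hqdvd : RDvd (ofPoly θ2 (q.map (barR h))) (xSkew (R2 h) θ2 ^ s - 1))
    (hhq : xSkew (R2 h) θ2 ^ s - 1 = ofPoly θ2 hq * ofPoly θ2 (q.map (barR h)))
    (hPsi : Prod.snd '' (pairToQuot h θ2 θ4 '' C) =
      ↑(Submodule.span (Skew (R4 h) θ4) {(Submodule.Quotient.mk (p := skewIdeal (R4 h) θ4 s) (ofPoly θ4 (2 * q)))})) :
    ∃ f l1 : Polynomial (R2 h),
      RDvd (ofPoly θ2 f) (xSkew (R2 h) θ2 ^ r - 1) ∧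
      RDvd (ofPoly θ2 f) (ofPoly θ2 hq * ofPoly θ2 l1) ∧
      pairToQuot h θ2 θ4 '' C =
        {u | ∃ c1 c2 : Skew (R4 h) θ4,
          u = smulRtheta h θ2 θ4 c1 ((Submodule.Quotient.mk (p := skewIdeal (R2 h) θ2 r) (ofPoly θ2 f)), 0)
            + smulRtheta h θ2 θ4 c2 ((Submodule.Quotient.mk (p := skewIdeal (R2 h) θ2 r) (ofPoly θ2 l1)), (Submodule.Quotient.mk (p := skewIdeal (R4 h) θ4 s) (ofPoly θ4 (2 * q))))} := by
  obtain ⟨hmon, -, hirr, -⟩ := hbp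
  have hc := theta_comm hmon hθ4 hθ2
  haveI := R2_nontrivial hirr
  obtain ⟨hD0, hDadd, hDsm⟩ := code_submod hc C hlin hcyc
  set D := pairToQuot h θ2 θ4 '' C with hD
  -- the left ideal of all `g` with `(g, 0) ∈ D`
  let J : Submodule (Skew (R2 h) θ2) (Skew (R2 h) θ2) :=
    { carrier := {g | ((Submodule.Quotient.mk g : SkewQuot (R2 h) θ2 r),
        (0 : SkewQuot (R4 h) θ4 s)) ∈ D}
      zero_mem' := hD0
      add_mem' := by
        intro a b ha hb
        have := hDadd _ ha _ hb
        rw [Prod.mk_add_mk, add_zero] at this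
        exact this
      smul_mem' := by
        intro c g hg
        obtain ⟨c', rfl⟩ := redSkew_surj (θ4 := θ4) c
        have := hDsm c' _ hg
        unfold smulRtheta at this
        rw [smul_zero] at this
        exact this }
  have hJ : ∀ g, g ∈ J ↔ ((Submodule.Quotient.mk g : SkewQuot (R2 h) θ2 r),
        (0 : SkewQuot (R4 h) θ4 s)) ∈ D := fun g => Iff.rfl
  obtain ⟨f, hfJ, hf⟩ := principal (R2_inv hirr) J
  have hq2 : (Submodule.Quotient.mk (p := skewIdeal (R4 h) θ4 s) (ofPoly θ4 (2 * q)))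
      ∈ Prod.snd '' D := by
    rw [hPsi]
    exact Submodule.subset_span rfl
  obtain ⟨⟨w, w'⟩, hwD, hw'⟩ := hq2
  obtain ⟨l, rfl⟩ := Submodule.Quotient.mk_surjective _ w
  simp only at hw'
  subst hw'
  refine ⟨toPoly f, toPoly l, ?_, ?_, ?_⟩
  · rw [ofPoly_toPoly]
    apply hf
    rw [hJ, (Submodule.Quotient.mk_eq_zero _).mpr]
    · exact hD0
    · exact Submodule.subset_span rfl
  · rw [ofPoly_toPoly, ofPoly_toPoly]
    apply hf
    rw [hJ]
    obtain ⟨H, hH⟩ := redSkew_surj (θ4 := θ4) (ofPoly θ2 hq)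
    have := hDsm H _ hwD
    unfold smulRtheta at this
    simp only [hH, ← Submodule.Quotient.mk_smul, smul_eq_mul] at this
    have h0 : (Submodule.Quotient.mk (H * ofPoly θ4 (2 * q)) : SkewQuot (R4 h) θ4 s) = 0 := by
      rw [Submodule.Quotient.mk_eq_zero]
      have hz : redSkew h θ2 (H * ofPoly θ4 q + (- 1) * (xSkew (R4 h) θ4 ^ s - 1)) = 0 := by
        have hx : ∀ k : ℕ, redSkew h θ2 (xSkew (R4 h) θ4 ^ k) = xSkew (R2 h) θ2 ^ k := by
          intro k
          have := redSkew_ofPoly (θ2 := θ2) (θ4 := θ4) (monomial k 1)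
          simpa only [ofPoly_monomial, Polynomial.map_monomial, map_one, cSkew_one,
            one_mul] using this
        let φ : Skew (R4 h) θ4 →+ Skew (R2 h) θ2 := AddMonoidHom.mk' (redSkew h θ2) redSkew_add
        have hneg : redSkew h θ2 (-(xSkew (R4 h) θ4 ^ s - 1))
            = -(xSkew (R2 h) θ2 ^ s - 1) := by
          change φ _ = _
          rw [map_neg, map_sub]
          have h1 : φ (xSkew (R4 h) θ4 ^ s) = xSkew (R2 h) θ2 ^ s := hx s
          have h2 : φ 1 = 1 := hx 0
          rw [h1, h2]
        rw [redSkew_add, redSkew_mul hc, hH, redSkew_ofPoly, ← hhq, neg_one_mul, hneg,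
          add_neg_cancel]
      have h2 := two_mul_of_red _ hz
      have h3 : H * ofPoly θ4 (2 * q) = 2 * (xSkew (R4 h) θ4 ^ s - 1) := by
        rw [ofPoly_two_mul, two_mul, mul_add, two_mul, ← sub_eq_zero]
        rw [← h2, two_mul]
        noncomm_ring
      rw [h3]
      exact skewIdeal_mem _ _
    rw [h0] at this
    exact this
  · rw [ofPoly_toPoly, ofPoly_toPoly]
    ext ⟨a, b⟩
    constructor
    · intro hab
      have hb : b ∈ Prod.snd '' D := ⟨_, hab, rfl⟩
      rw [hPsi] at hb
      obtain ⟨c2, hc2⟩ := Submodule.mem_span_singleton.mp hb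
      obtain ⟨a, rfl⟩ := Submodule.Quotient.mk_surjective _ a
      have hm := hDadd _ hab _ (hDsm (cSkew θ4 (-1)) _ (hDsm c2 _ hwD))
      have hn1 : cSkew θ4 (-1 : R4 h) = -1 := by
        rw [eq_neg_iff_add_eq_zero, ← cSkew_one, ← cSkew_add, neg_add_cancel, cSkew_zero]
      have hn2 : redSkew h θ2 (cSkew θ4 (-1 : R4 h)) = -1 := by
        rw [redSkew_c, map_neg, map_one]
        rw [eq_neg_iff_add_eq_zero, ← cSkew_one, ← cSkew_add, neg_add_cancel, cSkew_zero]
      unfold smulRtheta at hm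
      rw [hn2, hn1] at hm
      simp only [ neg_smul, one_smul, hc2, Prod.mk_add_mk, add_neg_cancel] at hm
      have hm' : a + -(redSkew h θ2 c2 * l) ∈ J := hm
      obtain ⟨u, hu⟩ := hf _ hm'
      obtain ⟨c1, rfl⟩ := redSkew_surj (θ4 := θ4) u
      refine ⟨c1, c2, ?_⟩
      unfold smulRtheta
      rw [Prod.mk_add_mk]
      refine Prod.ext ?_ ?_
      · simp only [← Submodule.Quotient.mk_smul, ← Submodule.Quotient.mk_add, smul_eq_mul]
        rw [← hu]
        congr 1
        abel
      · simp only [smul_zero, zero_add]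
        exact hc2.symm
    · rintro ⟨c1, c2, hcc⟩
      rw [hcc]
      exact hDadd _ (hDsm c1 _ hfJ) _ (hDsm c2 _ hwD)
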